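/- Let c be a choice with competitive limited attention on a finite nonempty set X, and suppose there exist a menu A and x ∈ A such that x ≠ c(A) and c(A) ≠ c(A\{x}). Then c(A) f x for every list f that list rationalizes c; moreover, for every explanation by competitive limited attention (Γ,▷) of c: Γ(A\{x}) ≠ Γ(A), x ∈ Γ(A), and c(A) ▷ x. -/

import Mathlib

/-!
**List part.** If `x ≠ c A ≠ c (A.erase x)` but `x` is above `c A` in a list `f` rationalizing `c`,
let `l` be the `f`-maximum of `A`. It cannot be `x`, since then `c A ∈ {c (A.erase x), x}`; nor can
it be `c A`, which lies below `x`. Hence `c A = c (A.erase l)`, and the smaller menu `A.erase l`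
violates the claim for the same `x`: if removing `x` from it did not change the choice, then adding
`l` back to both menus would give `c (A.erase x) = c A`. Induction on the menu finishes the argument
(`ListRationalizes.rel_of_choice_ne_choice_erase`).

**Attention part.** Maxima of `rhd` are unique, so `Γ (A.erase x) = Γ A` would force
`c (A.erase x) = c A`. The filter condition then puts `x` in `Γ A`, whose `rhd`-maximum is `c A`.
-/

open Finset

variable {X : Type*} [DecidableEq X]

/-- `a` is the `r`-greatest element among those satisfying `P`. -/
def IsRMax (r : X → X → Prop) (P : X → Prop) (a : X) : Prop :=
  P a ∧ ∀ y, P y → y ≠ a → r a y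

/-- `a` is the `r`-least element among those satisfying `P`. -/
def IsRMin (r : X → X → Prop) (P : X → Prop) (a : X) : Prop :=
  P a ∧ ∀ y, P y → y ≠ a → r y a

def Asym (r : X → X → Prop) : Prop := ∀ x y, r x y → ¬ r y x

def StrictPartial (r : X → X → Prop) : Prop :=
  Asym r ∧ ∀ x y z, r x y → r y z → r x z

def StrictLinear (r : X → X → Prop) : Prop :=
  StrictPartial r ∧ ∀ x y : X, x ≠ y → r x y ∨ r y x

/-- No cycle `x₁ ≻ x₂ ≻ … ≻ xₙ ≻ x₁` with `n ≥ 3`. -/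
def Acyclic (r : X → X → Prop) : Prop :=
  ¬ ∃ (n : ℕ) (f : ℕ → X), 3 ≤ n ∧ (∀ i, i + 1 < n → r (f i) (f (i + 1))) ∧
    r (f (n - 1)) (f 0)

def ChoiceFun (c : Finset X → X) : Prop :=
  ∀ A : Finset X, A.Nonempty → c A ∈ A

def ChoiceCorr (Γ : Finset X → Finset X) : Prop :=
  ∀ A : Finset X, A.Nonempty → (Γ A).Nonempty ∧ Γ A ⊆ A

/-- `x ∈ max(A, r)`: `x` is in `A` and is undominated in `A` w.r.t. `r`. -/
def MaxOf (r : X → X → Prop) (A : Finset X) (x : X) : Prop :=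
  x ∈ A ∧ ∀ y ∈ A, ¬ r y x

/-- The pair `(gt, rhd)` describes `c` as a shortlisting. -/
def Describes (gt rhd : X → X → Prop) (c : Finset X → X) : Prop :=
  StrictPartial gt ∧ StrictLinear rhd ∧
    ∀ A : Finset X, A.Nonempty → IsRMax rhd (MaxOf gt A) (c A)

def Shortlisting (c : Finset X → X) : Prop :=
  ∃ gt rhd : X → X → Prop, Describes gt rhd c

/-- Optimal attention filter. -/
def OptimalFilter (Γ : Finset X → Finset X) : Prop :=
  ChoiceCorr Γ ∧
  (∀ B : Finset X, B.Nonempty → ∀ x ∈ B, x ∉ Γ B → Γ (B.erase x) ⊆ Γ B) ∧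
  (∀ B : Finset X, B.Nonempty → ∀ x ∈ B, ∀ y : X,
    y ∈ Γ {x, y} → y ∈ Γ (B.erase x) → y ∈ Γ B) ∧
  (∀ B : Finset X, B.Nonempty → ∀ x ∈ B, (B.erase x).Nonempty →
    (Γ B).erase x ⊆ Γ (B.erase x))

/-- `(Γ, rhd)` is an explanation by optimal limited attention of `c`. -/
def ExplByOLA (Γ : Finset X → Finset X) (rhd : X → X → Prop) (c : Finset X → X) : Prop :=
  OptimalFilter Γ ∧ StrictLinear rhd ∧
    ∀ A : Finset X, A.Nonempty → IsRMax rhd (· ∈ Γ A) (c A)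

/-- Choice with optimal limited attention. -/
def COLA (c : Finset X → X) : Prop :=
  ∃ (Γ : Finset X → Finset X) (rhd : X → X → Prop), ExplByOLA Γ rhd c

/-- Salient attention filter relative to `rhd`. -/
def SalientFilter (rhd : X → X → Prop) (Γ : Finset X → Finset X) : Prop :=
  ChoiceCorr Γ ∧
  ∀ B : Finset X, B.Nonempty → ∀ x ∈ B,
    ¬ IsRMin rhd (· ∈ B) x → ¬ IsRMax rhd (· ∈ Γ B) x →
      (Γ B).erase x = Γ (B.erase x)

/-- `(Γ, rhd)` is an explanation by salient limited attention of `c`. -/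
def ExplBySLA (Γ : Finset X → Finset X) (rhd : X → X → Prop) (c : Finset X → X) : Prop :=
  StrictLinear rhd ∧ SalientFilter rhd Γ ∧
    ∀ A : Finset X, A.Nonempty → IsRMax rhd (· ∈ Γ A) (c A)

/-- Choice with salient limited attention. -/
def CSLA (c : Finset X → X) : Prop :=
  ∃ (Γ : Finset X → Finset X) (rhd : X → X → Prop), ExplBySLA Γ rhd c

/-- Selective salient attention filter relative to `rhd`. -/
def SelectiveFilter (rhd : X → X → Prop) (Γ : Finset X → Finset X) : Prop :=
  ChoiceCorr Γ ∧
  ∀ B : Finset X, B.Nonempty → ∀ x ∈ B,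
    ¬ IsRMax rhd (· ∈ Γ B) x → (Γ B).erase x = Γ (B.erase x)

/-- Choice with selective salient limited attention. -/
def CSSLA (c : Finset X → X) : Prop :=
  ∃ (Γ : Finset X → Finset X) (rhd : X → X → Prop),
    StrictLinear rhd ∧ SelectiveFilter rhd Γ ∧
      ∀ A : Finset X, A.Nonempty → IsRMax rhd (· ∈ Γ A) (c A)

def Rationalizable (c : Finset X → X) : Prop :=
  ∃ rhd : X → X → Prop, StrictLinear rhd ∧
    ∀ A : Finset X, A.Nonempty → IsRMax rhd (· ∈ A) (c A)

/-- Competitive attention filter relative to `rhd`. -/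
def CompetitiveFilter (rhd : X → X → Prop) (Γ : Finset X → Finset X) : Prop :=
  ChoiceCorr Γ ∧
  (∀ A : Finset X, A.Nonempty → ∀ x ∈ A, x ∉ Γ A → Γ A = Γ (A.erase x)) ∧
  (∀ A : Finset X, 1 < A.card → ∀ x y : X,
    IsRMax rhd (· ∈ A) y → IsRMax rhd (· ∈ Γ (A.erase y)) x →
      (y ∈ Γ {x, y} ↔ y ∈ Γ A))

/-- `(Γ, rhd)` is an explanation by competitive limited attention of `c`. -/
def ExplByCCLA (Γ : Finset X → Finset X) (rhd : X → X → Prop) (c : Finset X → X) : Prop :=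
  StrictLinear rhd ∧ CompetitiveFilter rhd Γ ∧
    ∀ A : Finset X, A.Nonempty → IsRMax rhd (· ∈ Γ A) (c A)

/-- Choice with competitive limited attention. -/
def CCLA (c : Finset X → X) : Prop :=
  ∃ (Γ : Finset X → Finset X) (rhd : X → X → Prop), ExplByCCLA Γ rhd c

/-- The list `f` list rationalizes `c`. -/
def ListRationalizes (f : X → X → Prop) (c : Finset X → X) : Prop :=
  StrictLinear f ∧
    ∀ A : Finset X, 1 < A.card → ∀ l : X, IsRMax f (· ∈ A) l →
      c A = c {c (A.erase l), l}

def ListRational (c : Finset X → X) : Prop :=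
  ∃ f : X → X → Prop, ListRationalizes f c

/-- `(u, v, W)` is a general-temptation representation of `c`. -/
def GTRrep (c : Finset X → X) (u v : X → ℝ) (W : ℝ → ℝ → ℝ) : Prop :=
  (∀ r s : ℝ, 0 ≤ W r s) ∧
  (∀ r₁ r₂ s : ℝ, r₁ < r₂ → W r₁ s < W r₂ s) ∧
  (∀ r s₁ s₂ : ℝ, s₁ < s₂ → W r s₁ < W r s₂) ∧
  ∀ (A : Finset X) (hA : A.Nonempty),
    c A ∈ A ∧ ∀ x ∈ A, x ≠ c A →
      W (u x) (v x - A.sup' hA v) < W (u (c A)) (v (c A) - A.sup' hA v)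

def HasGTR (c : Finset X → X) : Prop :=
  ∃ (u v : X → ℝ) (W : ℝ → ℝ → ℝ), GTRrep c u v W

/-- `(gg, U)` is a conspicuity based endogenous reference representation of `c`. -/
def CERrep (c : Finset X → X) (gg : X → X → Prop) (U : X → X → ℝ) : Prop :=
  StrictLinear gg ∧ (∀ z : X, Function.Injective (U z)) ∧
  ∀ A : Finset X, A.Nonempty → ∀ m : X, IsRMax gg (· ∈ A) m →
    c A ∈ A ∧ ∀ x ∈ A, x ≠ c A → U m x < U m (c A)

def HasCER (c : Finset X → X) : Prop :=
  ∃ (gg : X → X → Prop) (U : X → X → ℝ), CERrep c gg U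

/-- `(A, B)` is a switch of `c`. -/
def Switch (c : Finset X → X) (A B : Finset X) : Prop :=
  A.Nonempty ∧ A ⊆ B ∧ c B ∈ A ∧ c A ≠ c B

/-- Revealed salience: `x ⊨_c y`. -/
def RevSal (c : Finset X → X) (x y : X) : Prop :=
  ∃ A : Finset X, x ∈ A ∧ y ∈ A ∧ x ≠ c A ∧ c (A.erase x) ≠ c A

/-- Axiom of Revealed Temptation. -/
def ART (c : Finset X → X) : Prop :=
  ∀ B : Finset X, B.Nonempty → ∃ x ∈ B,
    ∀ B' B'' : Finset X, x ∈ B' → B' ⊂ B'' → B'' ⊆ B → ¬ Switch c B' B''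

/-- The revealed relation `R^c`. -/
def Rrel (c : Finset X → X) (x y : X) : Prop :=
  (∃ A : Finset X, A.Nonempty ∧ x = c (insert y A) ∧ x ≠ c A) ∨
  (∃ A : Finset X, A.Nonempty ∧ y = c (insert x A) ∧ x = c {x, y}) ∨
  (∃ A : Finset X, A.Nonempty ∧ y ≠ c (insert x A) ∧ y = c {x, y} ∧ y = c A)

/-- The revealed-to-follow relation `F_c`. -/
def Frel (c : Finset X → X) (x y : X) : Prop :=
  (∃ A : Finset X, A.Nonempty ∧ x = c (insert y A) ∧ y = c {x, y}) ∨
  (∃ A : Finset X, A.Nonempty ∧ x = c (insert y A) ∧ x ≠ c A) ∨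
  (∃ A : Finset X, A.Nonempty ∧ x ≠ c (insert y A) ∧ x = c {x, y} ∧ x = c A)

theorem IsRMax.unique {r : X → X → Prop} (hr : Asym r) {P : X → Prop} {a b : X}
    (ha : IsRMax r P a) (hb : IsRMax r P b) : a = b := by
  by_contra hab
  exact hr a b (ha.2 b hb.1 (Ne.symm hab)) (hb.2 a ha.1 hab)

theorem StrictLinear.exists_isRMax {r : X → X → Prop} (hr : StrictLinear r) {A : Finset X}
    (hA : A.Nonempty) : ∃ l, IsRMax r (· ∈ A) l := by
  induction hA using Finset.Nonempty.cons_induction with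
  | singleton a =>
    exact ⟨a, by simp, fun y hy hya => absurd (Finset.mem_singleton.1 hy) hya⟩
  | cons a s ha hs ih =>
    obtain ⟨l, hl, hmax⟩ := ih
    have hal : a ≠ l := fun h => ha (h ▸ hl)
    rcases hr.2 a l hal with h | h
    · refine ⟨a, by simp, fun y hy hya => ?_⟩
      have hys : y ∈ s := (Finset.mem_cons.1 hy).resolve_left hya
      by_cases hyl : y = l
      · exact hyl ▸ h
      · exact hr.1.2 a l y h (hmax y hys hyl)
    · refine ⟨l, Finset.mem_cons.2 (Or.inr hl), fun y hy hyl => ?_⟩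
      rcases Finset.mem_cons.1 hy with rfl | hys
      · exact h
      · exact hmax y hys hyl

/-- In a rationalizing list, an unchosen item whose removal changes the choice comes before
the chosen item. -/
theorem ListRationalizes.rel_of_choice_ne_choice_erase {c : Finset X → X} (hc : ChoiceFun c)
    {f : X → X → Prop} (hf : ListRationalizes f c) {x : X} (A : Finset X) (hx : x ∈ A)
    (h1 : x ≠ c A) (h2 : c A ≠ c (A.erase x)) : f (c A) x := by
  induction A using Finset.strongInduction with
  | H A ih =>
    obtain ⟨hlin, hlist⟩ := hf
    by_contra hnot
    have hcA : c A ∈ A := hc A ⟨x, hx⟩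
    have hfx : f x (c A) := (hlin.2 x (c A) h1).resolve_right hnot
    obtain ⟨l, hl, hmax⟩ := hlin.exists_isRMax ⟨x, hx⟩
    have hstep := hlist A (Finset.one_lt_card.2 ⟨x, hx, c A, hcA, h1⟩) l ⟨hl, hmax⟩
    have hmem : c A = c (A.erase l) ∨ c A = l := by
      have h := hc {c (A.erase l), l} ⟨l, by simp⟩
      rw [← hstep] at h
      simpa using h
    have hlc : l ≠ c A := fun h => hlin.1.1 _ _ hfx (h ▸ hmax x hx (h ▸ h1))
    have hlx : l ≠ x := by
      rintro rfl
      exact hmem.elim h2 h1.symm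
    have hce : c A = c (A.erase l) := hmem.resolve_right hlc.symm
    have h2' : c (A.erase l) ≠ c ((A.erase l).erase x) := by
      intro h
      have hstep' := hlist (A.erase x)
        (Finset.one_lt_card.2 ⟨l, Finset.mem_erase.2 ⟨hlx, hl⟩, c A,
          Finset.mem_erase.2 ⟨h1.symm, hcA⟩, hlc⟩) l
        ⟨Finset.mem_erase.2 ⟨hlx, hl⟩, fun y hy hyl => hmax y (Finset.mem_of_mem_erase hy) hyl⟩
      rw [Finset.erase_right_comm, ← h, ← hstep] at hstep'
      exact h2 hstep'.symm
    have := ih (A.erase l) (Finset.erase_ssubset hl) (Finset.mem_erase.2 ⟨hlx.symm, hx⟩)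
      (hce ▸ h1) h2'
    exact hnot (hce ▸ this)

theorem stmt_12 [Fintype X] [Nonempty X] (c : Finset X → X) (hc : ChoiceFun c)
    (hCCLA : CCLA c) (A : Finset X) (hA : A.Nonempty) (x : X) (hx : x ∈ A)
    (h1 : x ≠ c A) (h2 : c A ≠ c (A.erase x)) :
    (∀ f : X → X → Prop, ListRationalizes f c → f (c A) x) ∧
    (∀ (Γ : Finset X → Finset X) (rhd : X → X → Prop), ExplByCCLA Γ rhd c →
      Γ (A.erase x) ≠ Γ A ∧ x ∈ Γ A ∧ rhd (c A) x) := by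
  refine ⟨fun f hf => hf.rel_of_choice_ne_choice_erase hc A hx h1 h2, ?_⟩
  rintro Γ rhd ⟨hlin, ⟨-, hfilter, -⟩, hchoice⟩
  have hne : (A.erase x).Nonempty := ⟨c A, Finset.mem_erase.2 ⟨h1.symm, hc A hA⟩⟩
  have hΓ : Γ (A.erase x) ≠ Γ A := fun h =>
    h2 ((hchoice A hA).unique hlin.1.1 (h ▸ hchoice (A.erase x) hne))
  have hxΓ : x ∈ Γ A := by
    by_contra hxn
    exact hΓ (hfilter A hA x hx hxn).symm
  exact ⟨hΓ, hxΓ, (hchoice A hA).2 x hxΓ h1⟩
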